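/- arXiv:1403.7610 — 2 statements merged into one kernel-verified Lean document; each statement's English description precedes it below -/
import Mathlib

section
/- M₀ satisfies Hrushovski's extension property: for every finite family f₁, …, f_k of isomorphisms between finite substructures of M₀, there exists a finite substructure F of M₀ containing the domains and ranges of all the f_i such that each f_i extends to an automorphism of F. -/
open FirstOrder Language Structure CategoryTheory

/-- The language `L₀` with a `2n`-ary relation symbol `E_n` for each `n ≥ 1`. -/
def L₀ : FirstOrder.Language where
  Functions := fun _ => Empty
  Relations := fun k => {n : ℕ // 0 < n ∧ k = n + n}

/-- The relation symbol `E_n`. -/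
def Esymb (n : ℕ) (hn : 0 < n) : L₀.Relations (n + n) := ⟨n, hn, rfl⟩

/-- `E_n(x̄, ȳ)` in an `L₀`-structure. -/
def ERel (M : Type*) [L₀.Structure M] (n : ℕ) (hn : 0 < n) (x y : Fin n → M) : Prop :=
  Structure.RelMap (Esymb n hn) (Fin.append x y)

/-- The defining conditions for membership in `K₀`: each `E_n` holds only on pairs of
injective `n`-tuples, is invariant under permuting the entries of each tuple separately,
and induces an equivalence relation on `n`-element subsets. -/
def IsK0Struct (C : Type*) [L₀.Structure C] : Prop :=
  ∀ (n : ℕ) (hn : 0 < n),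
    (∀ x y : Fin n → C, ERel C n hn x y → Function.Injective x ∧ Function.Injective y) ∧
    (∀ (x y : Fin n → C) (σ τ : Equiv.Perm (Fin n)),
        ERel C n hn x y → ERel C n hn (x ∘ σ) (y ∘ τ)) ∧
    (∀ x : Fin n → C, Function.Injective x → ERel C n hn x x) ∧
    (∀ x y : Fin n → C, ERel C n hn x y → ERel C n hn y x) ∧
    (∀ x y z : Fin n → C, ERel C n hn x y → ERel C n hn y z → ERel C n hn x z)

/-- The class `K₀` of finite `L₀`-structures as above. -/
def K₀ : Set (Bundled L₀.Structure) := {C | Finite C ∧ IsK0Struct C}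

/-!
A structure in `K₀` amounts to a colouring of its nonempty finite subsets, up to renaming the
colours. Given `A` in `K₀` with colouring `c`, let `V` be the free `𝔽₂`-module on the colours, and
let `B` consist of the pairs `(a, χ)` with `a ∈ A` and `χ` a `V`-valued function on the subsets
of `A`. A subset of `B` lying injectively over `X ⊆ A` gets the colour `∑ χ X`, summed over its
points `(a, χ)`. Choosing `m` with `∑ x ∈ X, m x X = c X` for all nonempty `X`, the section
`a ↦ (a, m a)` embeds `A` into `B`.

A partial automorphism of `A` extends to a permutation of `A` and induces a permutation of the
colours; together they act on `B`. The image of the section may then disagree with the section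
over the range of the partial automorphism, and this is repaired by adding some `δ a` to each `χ`
over `a`. This preserves the colours if `∑ x ∈ X, δ x X = 0` for all `X`. When `X` lies in the
range, this holds because the partial automorphism respects colours; otherwise `δ x X` is
unconstrained at some point `x ∈ X`. So `B` is a finite structure in `K₀` to which all partial
automorphisms of `A` extend, and when `A` lies in the Fraïssé limit, ultrahomogeneity embeds `B`
over `A` into it.
-/

universe u v

section PartialMaps

theorem exists_perm_apply_eq_of_eq_iff_eq {α : Type*} {β : Type*} [Finite β] {f g : α → β}
    (h : ∀ a b, f a = f b ↔ g a = g b) : ∃ σ : Equiv.Perm β, ∀ a, σ (f a) = g a := by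
  classical
  obtain ⟨e, he⟩ : ∃ e : Set.range f ≃ Set.range g,
      ∀ a, e (Set.rangeFactorization f a) = Set.rangeFactorization g a :=
    ⟨(Setoid.quotientKerEquivRange f).symm.trans
      ((Quotient.congrRight h).trans (Setoid.quotientKerEquivRange g)), fun a => by
        have : (Setoid.quotientKerEquivRange f).symm (Set.rangeFactorization f a) =
            Quotient.mk _ a := (Equiv.symm_apply_eq _).2 rfl
        rw [Equiv.trans_apply, this]
        rfl⟩
  exact ⟨e.extendSubtype, fun a =>
    (e.extendSubtype_apply_of_mem _ ⟨a, rfl⟩).trans (congrArg Subtype.val (he a))⟩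

theorem exists_eqOn_sum_eq {A V : Type*} [AddCommGroup V] {R : Set A} {f : A → V} {X : Finset A}
    {t : V} (h : ↑X ⊆ R → ∑ x ∈ X, f x = t) :
    ∃ f' : A → V, Set.EqOn f' f R ∧ ∑ x ∈ X, f' x = t := by
  classical
  by_cases hX : ↑X ⊆ R
  · exact ⟨f, Set.eqOn_refl f R, h hX⟩
  · obtain ⟨a, haX, haR⟩ := Set.not_subset.1 hX
    refine ⟨Function.update f a (t - ∑ x ∈ X \ {a}, f x), fun x hx => ?_, ?_⟩
    · exact Function.update_of_ne (ne_of_mem_of_not_mem hx haR) _ _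
    · rw [Finset.sum_update_of_mem haX, sub_add_cancel]

theorem exists_embedding_trans_eq {α β γ : Type*} {x : α ↪ γ} {y : β ↪ γ}
    (h : Set.range x ⊆ Set.range y) : ∃ z : α ↪ β, z.trans y = x := by
  obtain ⟨z, hz⟩ := Set.range_subset_range_iff_exists_comp.1 h
  have hz_inj : Function.Injective z := Function.Injective.of_comp (hz ▸ x.injective)
  exact ⟨⟨z, hz_inj⟩, DFunLike.coe_injective hz.symm⟩

theorem exists_perm_trans_eq_of_map_univ_eq {α β : Type*} [Fintype α] {x y : α ↪ β}
    (h : Finset.univ.map x = Finset.univ.map y) : ∃ σ : Equiv.Perm α, ⇑x ∘ σ = y := by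
  have hrange : Set.range y = Set.range x := by
    simpa using congrArg (fun X : Finset β => (X : Set β)) h.symm
  obtain ⟨z, hz⟩ := exists_embedding_trans_eq hrange.subset
  exact ⟨z.equivOfFiniteSelfEmbedding, congrArg DFunLike.coe hz⟩

theorem exists_trans_eq_of_map_univ_eq_map {α β γ : Type*} [Fintype α] {x : α ↪ γ} {φ : β ↪ γ}
    {X : Finset β} (h : Finset.univ.map x = X.map φ) :
    ∃ z : α ↪ β, z.trans φ = x ∧ Finset.univ.map z = X := by
  have hrange : Set.range x ⊆ Set.range φ := by
    rw [← Set.image_univ, ← Finset.coe_univ, ← Finset.coe_map, h, Finset.coe_map]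
    exact Set.image_subset_range φ X
  obtain ⟨z, rfl⟩ := exists_embedding_trans_eq hrange
  exact ⟨z, rfl, Finset.map_injective φ (by rw [Finset.map_map, h])⟩

theorem map_univ_comp_perm {α β : Type*} [Fintype α] {x : α → β} (hx : Function.Injective x)
    (σ : Equiv.Perm α) :
    Finset.univ.map ⟨x ∘ σ, hx.comp σ.injective⟩ = Finset.univ.map ⟨x, hx⟩ := by
  conv_rhs => rw [← Finset.univ_map_equiv_to_embedding σ, Finset.map_map]
  rfl

theorem append_comp_comp {α β : Type*} {m n : ℕ} (φ : α → β) (x : Fin m → α) (y : Fin n → α) :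
    Fin.append (φ ∘ x) (φ ∘ y) = φ ∘ Fin.append x y := by
  ext i
  induction i using Fin.addCases <;>
    simp only [Function.comp_apply, Fin.append_left, Fin.append_right]

end PartialMaps

section Valuations

variable {A : Type u} {V : Type v} [AddCommGroup V]

/-- A point of `A` together with a valuation, which contributes a summand in `V` to the colour of
each finite set of base points. -/
abbrev ValuedPoint (A : Type u) (V : Type v) : Type (max u v) := A × (Finset A → V)

open Classical in
/-- The colour of a finite set of valued points: the sum of their valuations at the set of their
base points, and the default value `0` if two of them share a base point. -/
noncomputable def colour (Z : Finset (ValuedPoint A V)) : V :=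
  if Set.InjOn Prod.fst (Z : Set (ValuedPoint A V)) then
    ∑ p ∈ Z, p.2 (Z.image Prod.fst)
  else 0

open Classical in
theorem colour_map {C : Type*} (g : C ↪ ValuedPoint A V) (Z : Finset C) :
    colour (Z.map g) =
      if Set.InjOn (fun z => (g z).1) (Z : Set C) then
        ∑ z ∈ Z, (g z).2 (Z.image fun z => (g z).1)
      else 0 := by
  have hinj : Set.InjOn Prod.fst (Z.map g : Set (ValuedPoint A V)) ↔
      Set.InjOn (fun z => (g z).1) (Z : Set C) := by
    rw [Finset.coe_map]
    exact g.injective.injOn.comp_iff.symm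
  have himage : (Z.map g).image Prod.fst = Z.image fun z => (g z).1 := by
    rw [Finset.map_eq_image, Finset.image_image, Function.comp_def]
  simp only [colour, hinj, himage, Finset.sum_map]

/-- The section of the projection `ValuedPoint A V → A` given by a family of valuations. -/
@[simps]
def valuationSection (m : A → Finset A → V) : A ↪ ValuedPoint A V where
  toFun a := (a, m a)
  inj' _ _ h := congrArg Prod.fst h

theorem colour_map_valuationSection (m : A → Finset A → V) (X : Finset A) :
    colour (X.map (valuationSection m)) = ∑ x ∈ X, m x X := by
  classical
  simp only [colour_map, valuationSection_apply, ← Function.id_def, Set.injOn_id, if_true,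
    Finset.image_id]

/-- The permutation of valued points induced by a permutation of `A` and an automorphism of `V`. -/
def relabel (π : Equiv.Perm A) (σ : V ≃+ V) : Equiv.Perm (ValuedPoint A V) :=
  Equiv.prodCongr π (π.finsetCongr.arrowCongr σ.toEquiv)

theorem relabel_apply (π : Equiv.Perm A) (σ : V ≃+ V) (p : ValuedPoint A V) :
    relabel π σ p = (π p.1, fun Y => σ (p.2 (Y.map π.symm.toEmbedding))) :=
  rfl

theorem colour_map_relabel (π : Equiv.Perm A) (σ : V ≃+ V) (Z : Finset (ValuedPoint A V)) :
    colour (Z.map (relabel π σ).toEmbedding) = σ (colour Z) := by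
  classical
  have hinj : Set.InjOn (fun p : ValuedPoint A V => π p.1) Z ↔
      Set.InjOn Prod.fst (Z : Set (ValuedPoint A V)) :=
    ⟨Set.InjOn.of_comp, π.injective.comp_injOn⟩
  have himage : (Z.image fun p => π p.1).map π.symm.toEmbedding = Z.image Prod.fst := by
    simp [Finset.map_eq_image, Finset.image_image, Function.comp_def]
  rw [colour_map]
  simp only [Equiv.coe_toEmbedding, relabel_apply, himage, hinj, colour, apply_ite σ, map_sum,
    map_zero]

/-- The permutation of valued points adding `δ a` to each valuation over `a`. -/
def twist (δ : A → Finset A → V) : Equiv.Perm (ValuedPoint A V) :=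
  Equiv.prodShear (Equiv.refl A) fun a => Equiv.addRight (δ a)

theorem twist_apply (δ : A → Finset A → V) (p : ValuedPoint A V) :
    twist δ p = (p.1, p.2 + δ p.1) :=
  rfl

theorem colour_map_twist {δ : A → Finset A → V} (hδ : ∀ X, ∑ x ∈ X, δ x X = 0)
    (Z : Finset (ValuedPoint A V)) : colour (Z.map (twist δ).toEmbedding) = colour Z := by
  classical
  rw [colour_map]
  simp only [Equiv.coe_toEmbedding, twist_apply, colour]
  refine if_ctx_congr Iff.rfl (fun hZ => ?_) fun _ => rfl
  have hcancel : ∑ p ∈ Z, δ p.1 (Z.image Prod.fst) = 0 := by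
    rw [← hδ (Z.image Prod.fst), Finset.sum_image hZ]
  simp only [Pi.add_apply, Finset.sum_add_distrib, hcancel, add_zero]

theorem exists_valuation_sum_eq (w : Finset A → V) :
    ∃ m : A → Finset A → V, ∀ X : Finset A, X.Nonempty → ∑ x ∈ X, m x X = w X := by
  have h (X : Finset A) : ∃ f : A → V, X.Nonempty → ∑ x ∈ X, f x = w X := by
    classical
    rcases X.eq_empty_or_nonempty with rfl | ⟨a, ha⟩
    · exact ⟨0, fun h => absurd h Finset.not_nonempty_empty⟩
    · exact ⟨Pi.single a (w X), fun _ => by rw [Finset.sum_pi_single', if_pos ha]⟩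
  choose f hf using h
  exact ⟨fun x X => f X x, hf⟩

theorem exists_perm_colour_map_eq {P : Type*} [Finite A] {σ : V ≃+ V} {m : A → Finset A → V}
    {u v : P ↪ A}
    (h : ∀ X : Finset P, ∑ x ∈ X, m (v x) (X.map v) = σ (∑ x ∈ X, m (u x) (X.map u))) :
    ∃ g : Equiv.Perm (ValuedPoint A V), (∀ Z, colour (Z.map g.toEmbedding) = σ (colour Z)) ∧
      ∀ p, g (valuationSection m (u p)) = valuationSection m (v p) := by
  obtain ⟨π, hπ⟩ := exists_perm_apply_eq_of_eq_iff_eq (f := u) (g := v) fun p q => by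
    rw [u.apply_eq_iff_eq, v.apply_eq_iff_eq]
  have hπ_symm (p : P) : π.symm (v p) = u p := π.symm_apply_eq.2 (hπ p).symm
  -- `relabel π σ` maps the section of `m` to the section of `mπ`.
  let mπ (a : A) (Y : Finset A) : V := σ (m (π.symm a) (Y.map π.symm.toEmbedding))
  have hcorr (Y : Finset A) : ∃ δ : A → V,
      Set.EqOn δ (fun a => m a Y - mπ a Y) (Set.range v) ∧ ∑ a ∈ Y, δ a = 0 := by
    refine exists_eqOn_sum_eq fun hY => ?_
    obtain ⟨X, rfl⟩ : ∃ X : Finset P, X.map v = Y := by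
      classical
      obtain ⟨X, -, hX⟩ := Finset.subset_set_image_iff.1 (Set.image_univ.symm ▸ hY)
      exact ⟨X, by rw [Finset.map_eq_image, hX]⟩
    have hX : (X.map v).map π.symm.toEmbedding = X.map u := by
      rw [Finset.map_map]
      exact congrArg (X.map ·) (DFunLike.ext _ _ hπ_symm)
    simp only [mπ, Finset.sum_sub_distrib, Finset.sum_map, hX, hπ_symm, h X, map_sum, sub_self]
  choose δ hδ hδ_sum using hcorr
  refine ⟨(relabel π σ).trans (twist fun a Y => δ Y a), fun Z => ?_, fun p => ?_⟩
  · rw [Equiv.trans_toEmbedding, ← Finset.map_map, colour_map_twist hδ_sum, colour_map_relabel]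
  · have hval (Y : Finset A) : mπ (v p) Y + δ Y (v p) = m (v p) Y := by
      rw [hδ Y ⟨p, rfl⟩, add_sub_cancel]
    simp only [mπ, hπ_symm] at hval
    simp only [Equiv.trans_apply, valuationSection_apply, relabel_apply, twist_apply, hπ]
    exact Prod.ext rfl (funext hval)

theorem exists_perm_of_colour_eq_iff {P Q R : Type*} [Finite A] [Finite Q] [Ring R]
    {c : Finset A → Q} {m : A → Finset A → (Q →₀ R)}
    (hm : ∀ X : Finset A, X.Nonempty → ∑ x ∈ X, m x X = Finsupp.single (c X) 1) {u v : P ↪ A}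
    (huv : ∀ X Y : Finset P, c (X.map u) = c (Y.map u) ↔ c (X.map v) = c (Y.map v)) :
    ∃ g : Equiv.Perm (ValuedPoint A (Q →₀ R)),
      (∀ X Y, colour (X.map g.toEmbedding) = colour (Y.map g.toEmbedding) ↔
        colour X = colour Y) ∧
      ∀ p, g (valuationSection m (u p)) = valuationSection m (v p) := by
  obtain ⟨τ, hτ⟩ := exists_perm_apply_eq_of_eq_iff_eq huv
  let σ : (Q →₀ R) ≃+ (Q →₀ R) := Finsupp.domCongr τ
  have hm_map (w : P ↪ A) {X : Finset P} (hX : X.Nonempty) :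
      ∑ x ∈ X, m (w x) (X.map w) = Finsupp.single (c (X.map w)) 1 := by
    rw [← hm _ hX.map, Finset.sum_map]
  have hσ (X : Finset P) : ∑ x ∈ X, m (v x) (X.map v) = σ (∑ x ∈ X, m (u x) (X.map u)) := by
    rcases X.eq_empty_or_nonempty with rfl | hX
    · simp only [Finset.sum_empty, map_zero]
    · rw [hm_map u hX, hm_map v hX, ← hτ X]
      exact (Finsupp.equivMapDomain_single τ _ _).symm
  obtain ⟨g, hg, hgm⟩ := exists_perm_colour_map_eq hσ
  exact ⟨g, fun X Y => by rw [hg, hg, σ.apply_eq_iff_eq], hgm⟩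

end Valuations

section EPPA

variable {L : FirstOrder.Language}

/-- `ι` witnesses the extension property for partial automorphisms of `A`: every isomorphism
between substructures of `A`, given as a pair of embeddings of the same structure `P`, extends to
an automorphism of `B`. -/
def IsEPPAWitness {A : Type u} {B : Type v} [L.Structure A] [L.Structure B] (ι : A ↪[L] B) : Prop :=
  ∀ ⦃P : Type u⦄ [L.Structure P] (u v : P ↪[L] A),
    ∃ g : B ≃[L] B, ∀ p, g (ι (u p)) = ι (v p)

/-- The extension property for partial automorphisms of a class of structures: each member embeds
into a witness belonging to the class. -/
def HasEPPA (K : Set (Bundled.{u} L.Structure)) : Prop :=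
  ∀ A ∈ K, ∃ B ∈ K, ∃ ι : A ↪[L] B, IsEPPAWitness ι

theorem exists_fg_extension_of_hasEPPA {M : Type u} [L.Structure M]
    (hM : L.IsUltrahomogeneous M) (hK : HasEPPA (L.age M)) {A : L.Substructure M} (hA : A.FG) :
    ∃ (F : L.Substructure M) (hAF : A ≤ F), F.FG ∧
      ∀ (S T : L.Substructure M) (hS : S ≤ A), T ≤ A → ∀ f : S ≃[L] T,
        ∃ g : F ≃[L] F, ∀ x : S, (g (Substructure.inclusion (hS.trans hAF) x) : M) = f x := by
  obtain ⟨⟨B, _⟩, ⟨hB, hBM⟩, ι, hι⟩ := hK (Bundled.of A)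
    ⟨A.fg_iff_structure_fg.1 hA, ⟨A.subtype⟩⟩
  obtain ⟨j, hj⟩ := hM.extend_embedding (A.fg_iff_structure_fg.1 hA) A.subtype ι (h := hBM)
  have hjι (a : A) : j (ι a) = a := (DFunLike.congr_fun hj a).symm
  refine ⟨j.toHom.range, fun a ha => ⟨ι ⟨a, ha⟩, hjι ⟨a, ha⟩⟩, hB.range j.toHom, ?_⟩
  intro S T hS hT f
  obtain ⟨g, hg⟩ := hι (Substructure.inclusion hS)
    ((Substructure.inclusion hT).comp f.toEmbedding)
  have hj_symm (a : A) (ha) : j.equivRange.symm ⟨a, ha⟩ = ι a := by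
    rw [← j.equivRange.injective.eq_iff, FirstOrder.Language.Equiv.apply_symm_apply]
    exact Subtype.ext (hjι a).symm
  refine ⟨j.equivRange.comp (g.comp j.equivRange.symm), fun x => ?_⟩
  calc j (g (j.equivRange.symm ⟨x, _⟩))
      = j (g (ι (Substructure.inclusion hS x))) :=
        congrArg (fun b => j (g b)) (hj_symm (Substructure.inclusion hS x) _)
    _ = j (ι (Substructure.inclusion hT (f x))) := congrArg j (hg x)
    _ = f x := hjι _

end EPPA

section ERel

variable {C : Type u} {D : Type v} [L₀.Structure C] [L₀.Structure D]

theorem relMap_comp_iff {φ : C → D}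
    (h : ∀ (n : ℕ) (hn : 0 < n) (x y : Fin n → C),
      ERel D n hn (φ ∘ x) (φ ∘ y) ↔ ERel C n hn x y)
    {k : ℕ} (r : L₀.Relations k) (z : Fin k → C) :
    RelMap r (φ ∘ z) ↔ RelMap r z := by
  obtain ⟨n, hn, rfl⟩ := r
  have hz := h n hn (fun i => z (Fin.castAdd n i)) (fun i => z (Fin.natAdd n i))
  rwa [ERel, ERel, append_comp_comp, Fin.append_castAdd_natAdd] at hz

theorem eRel_comp_iff (φ : C ↪[L₀] D) {n : ℕ} (hn : 0 < n) (x y : Fin n → C) :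
    ERel D n hn (φ ∘ x) (φ ∘ y) ↔ ERel C n hn x y := by
  rw [ERel, append_comp_comp]
  exact φ.map_rel _ _

/-- An injection preserving and reflecting every `E_n`, as an embedding of structures. -/
def embeddingOfERel (φ : C ↪ D)
    (h : ∀ (n : ℕ) (hn : 0 < n) (x y : Fin n → C),
      ERel D n hn (φ ∘ x) (φ ∘ y) ↔ ERel C n hn x y) : C ↪[L₀] D where
  toEmbedding := φ
  map_fun' f := Empty.elim f
  map_rel' r z := relMap_comp_iff h r z

/-- A bijection preserving and reflecting every `E_n`, as an isomorphism of structures. -/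
def equivOfERel (φ : C ≃ D)
    (h : ∀ (n : ℕ) (hn : 0 < n) (x y : Fin n → C),
      ERel D n hn (φ ∘ x) (φ ∘ y) ↔ ERel C n hn x y) : C ≃[L₀] D where
  toEquiv := φ
  map_fun' f := Empty.elim f
  map_rel' r z := relMap_comp_iff h r z

end ERel

section FinsetRel

variable {C : Type u} {D : Type v} [L₀.Structure C] [L₀.Structure D]

/-- The union over `n` of the relations which the `E_n` induce on `n`-element sets, where `n = 0`
is allowed, so that `∅` is related exactly to itself. -/
def FinsetRel (X Y : Finset C) : Prop :=
  ∃ (n : ℕ) (x y : Fin n ↪ C), Finset.univ.map x = X ∧ Finset.univ.map y = Y ∧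
    ∀ hn : 0 < n, ERel C n hn x y

theorem finsetRel_map_iff (φ : C ↪[L₀] D) (X Y : Finset C) :
    FinsetRel (X.map φ.toEmbedding) (Y.map φ.toEmbedding) ↔ FinsetRel X Y := by
  constructor
  · rintro ⟨n, x, y, hX, hY, hxy⟩
    obtain ⟨x, rfl, hx⟩ := exists_trans_eq_of_map_univ_eq_map hX
    obtain ⟨y, rfl, hy⟩ := exists_trans_eq_of_map_univ_eq_map hY
    exact ⟨n, x, y, hx, hy, fun hn => (eRel_comp_iff φ hn x y).1 (hxy hn)⟩
  · rintro ⟨n, x, y, rfl, rfl, hxy⟩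
    exact ⟨n, x.trans φ.toEmbedding, y.trans φ.toEmbedding, (Finset.map_map ..).symm,
      (Finset.map_map ..).symm, fun hn => (eRel_comp_iff φ hn x y).2 (hxy hn)⟩

theorem FinsetRel.refl (hC : IsK0Struct C) (X : Finset C) : FinsetRel X X := by
  let x : Fin X.card ↪ C := X.equivFin.symm.toEmbedding.trans (Function.Embedding.subtype _)
  have hx : Finset.univ.map x = X := by
    rw [← Finset.map_map, Finset.univ_map_equiv_to_embedding]
    exact Finset.attach_map_val
  exact ⟨X.card, x, x, hx, hx, fun hn => (hC X.card hn).2.2.1 x x.injective⟩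

theorem finsetRel_map_univ_iff (hC : IsK0Struct C) {n : ℕ} (hn : 0 < n) (x y : Fin n ↪ C) :
    FinsetRel (Finset.univ.map x) (Finset.univ.map y) ↔ ERel C n hn x y := by
  refine ⟨?_, fun h => ⟨n, x, y, rfl, rfl, fun _ => h⟩⟩
  rintro ⟨k, x', y', hx, hy, hxy⟩
  obtain rfl : k = n := by simpa using congrArg Finset.card hx
  obtain ⟨σ, hσ⟩ := exists_perm_trans_eq_of_map_univ_eq hx
  obtain ⟨τ, hτ⟩ := exists_perm_trans_eq_of_map_univ_eq hy
  exact hσ ▸ hτ ▸ (hC k hn).2.1 x' y' σ τ (hxy hn)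

theorem FinsetRel.symm (hC : IsK0Struct C) {X Y : Finset C} (h : FinsetRel X Y) :
    FinsetRel Y X := by
  obtain ⟨n, x, y, hX, hY, hxy⟩ := h
  exact ⟨n, y, x, hY, hX, fun hn => (hC n hn).2.2.2.1 x y (hxy hn)⟩

theorem FinsetRel.trans (hC : IsK0Struct C) {X Y Z : Finset C} (hXY : FinsetRel X Y)
    (hYZ : FinsetRel Y Z) : FinsetRel X Z := by
  obtain ⟨n, x, y, rfl, rfl, hxy⟩ := hXY
  obtain ⟨k, y', z, hy, rfl, hyz⟩ := hYZ
  obtain rfl : k = n := by simpa using congrArg Finset.card hy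
  obtain ⟨σ, hσ⟩ := exists_perm_trans_eq_of_map_univ_eq hy
  refine ⟨k, x, z, rfl, rfl, fun hn => (hC k hn).2.2.2.2 x y z (hxy hn) ?_⟩
  exact hσ ▸ (hC k hn).2.1 y' z σ 1 (hyz hn)

/-- The equivalence relation on finite subsets underlying a structure of the class `K₀`. -/
def finsetSetoid (hC : IsK0Struct C) : Setoid (Finset C) where
  r := FinsetRel
  iseqv := ⟨FinsetRel.refl hC, FinsetRel.symm hC, FinsetRel.trans hC⟩

end FinsetRel

section Colouring

variable {C : Type u} {D : Type v} {Q : Type*} {Q' : Type*}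

/-- A colouring of finite subsets which encodes a structure: `E_n` relates the enumerations of
`n`-element sets of the same colour. -/
def IsColouring [L₀.Structure C] (c : Finset C → Q) : Prop :=
  ∀ (n : ℕ) (hn : 0 < n) (x y : Fin n → C), ERel C n hn x y ↔
    ∃ (hx : Function.Injective x) (hy : Function.Injective y),
      c (Finset.univ.map ⟨x, hx⟩) = c (Finset.univ.map ⟨y, hy⟩)

/-- The structure encoded by a colouring of finite subsets. -/
@[reducible]
def colouringStructure (c : Finset C → Q) : L₀.Structure C where
  funMap f := Empty.elim f
  RelMap r z := ∃ x y : Fin r.1 ↪ C, Fin.append x y ∘ Fin.cast r.2.2 = z ∧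
    c (Finset.univ.map x) = c (Finset.univ.map y)

theorem isColouring_colouringStructure (c : Finset C → Q) :
    @IsColouring C Q (colouringStructure c) c := by
  intro n hn x y
  constructor
  · rintro ⟨(x' : Fin n ↪ C), (y' : Fin n ↪ C), h, hc⟩
    obtain ⟨rfl, rfl⟩ : ⇑x' = x ∧ ⇑y' = y :=
      Prod.ext_iff.1 ((Fin.appendEquiv n n).injective (a₁ := (⇑x', ⇑y')) (a₂ := (x, y)) h)
    exact ⟨x'.injective, y'.injective, hc⟩
  · rintro ⟨hx, hy, h⟩
    exact ⟨⟨x, hx⟩, ⟨y, hy⟩, rfl, h⟩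

theorem IsK0Struct.isColouring [L₀.Structure C] (hC : IsK0Struct C) :
    IsColouring (fun X : Finset C => Quotient.mk (finsetSetoid hC) X) := by
  intro n hn x y
  simp only [Quotient.eq]
  constructor
  · intro h
    obtain ⟨hx, hy⟩ := (hC n hn).1 x y h
    exact ⟨hx, hy, (finsetRel_map_univ_iff hC hn ⟨x, hx⟩ ⟨y, hy⟩).2 h⟩
  · rintro ⟨hx, hy, h⟩
    exact (finsetRel_map_univ_iff hC hn ⟨x, hx⟩ ⟨y, hy⟩).1 h

theorem IsColouring.isK0Struct [L₀.Structure C] {c : Finset C → Q} (hc : IsColouring c) :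
    IsK0Struct C := by
  intro n hn
  simp only [hc n hn]
  refine ⟨fun x y ⟨hx, hy, _⟩ => ⟨hx, hy⟩, ?_, fun x hx => ⟨hx, hx, trivial⟩,
    fun x y ⟨hx, hy, h⟩ => ⟨hy, hx, h.symm⟩,
    fun x y z ⟨hx, _, hxy⟩ ⟨_, hz, hyz⟩ => ⟨hx, hz, hxy.trans hyz⟩⟩
  rintro x y σ τ ⟨hx, hy, h⟩
  refine ⟨hx.comp σ.injective, hy.comp τ.injective, ?_⟩
  rwa [map_univ_comp_perm, map_univ_comp_perm]

theorem IsColouring.eRel_comp_iff [L₀.Structure C] [L₀.Structure D] {c : Finset C → Q}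
    {d : Finset D → Q'} (hc : IsColouring c) (hd : IsColouring d) {φ : C ↪ D}
    (h : ∀ X Y : Finset C, X.Nonempty → Y.Nonempty → (d (X.map φ) = d (Y.map φ) ↔ c X = c Y))
    (n : ℕ) (hn : 0 < n) (x y : Fin n → C) :
    ERel D n hn (φ ∘ x) (φ ∘ y) ↔ ERel C n hn x y := by
  have : NeZero n := ⟨hn.ne'⟩
  have hmap {z : Fin n → C} (hz : Function.Injective z) :
      Finset.univ.map ⟨φ ∘ z, φ.injective.comp hz⟩ = (Finset.univ.map ⟨z, hz⟩).map φ :=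
    (Finset.map_map ⟨z, hz⟩ φ Finset.univ).symm
  rw [hc, hd]
  constructor
  · rintro ⟨hx, hy, hxy⟩
    refine ⟨hx.of_comp, hy.of_comp, ?_⟩
    rwa [hmap hx.of_comp, hmap hy.of_comp, h _ _ Finset.univ_nonempty.map
      Finset.univ_nonempty.map] at hxy
  · rintro ⟨hx, hy, hxy⟩
    refine ⟨φ.injective.comp hx, φ.injective.comp hy, ?_⟩
    rwa [hmap hx, hmap hy, h _ _ Finset.univ_nonempty.map Finset.univ_nonempty.map]

end Colouring

theorem hasEPPA_K₀ : HasEPPA K₀.{u} := by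
  rintro ⟨A, _⟩ ⟨_, hA⟩
  let c (X : Finset A) := Quotient.mk (finsetSetoid hA) X
  have hc : IsColouring c := hA.isColouring
  obtain ⟨m, hm⟩ := exists_valuation_sum_eq fun X => Finsupp.single (c X) (1 : ZMod 2)
  let B := ValuedPoint A (Quotient (finsetSetoid hA) →₀ ZMod 2)
  let _ : L₀.Structure B := colouringStructure colour
  have hB : IsColouring (colour : Finset B → _) := isColouring_colouringStructure colour
  have hsection (X Y : Finset A) (hX : X.Nonempty) (hY : Y.Nonempty) :
      colour (X.map (valuationSection m)) = colour (Y.map (valuationSection m)) ↔ c X = c Y := by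
    rw [colour_map_valuationSection, colour_map_valuationSection, hm X hX, hm Y hY,
      (Finsupp.single_left_injective one_ne_zero).eq_iff]
  have : Finite (Quotient (finsetSetoid hA) →₀ ZMod 2) :=
    Finite.of_equiv _ Finsupp.equivFunOnFinite.symm
  have hB_finite : Finite B := inferInstanceAs (Finite (A × (Finset A → _)))
  refine ⟨⟨B, _⟩, ⟨hB_finite, hB.isK0Struct⟩,
    embeddingOfERel (valuationSection m) (hc.eRel_comp_iff hB hsection), fun P _ u v => ?_⟩
  have hc_map (w : P ↪[L₀] A) (X Y : Finset P) :
      c (X.map w.toEmbedding) = c (Y.map w.toEmbedding) ↔ FinsetRel X Y :=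
    Quotient.eq.trans (finsetRel_map_iff w X Y)
  obtain ⟨g, hg, hgm⟩ := exists_perm_of_colour_eq_iff hm fun X Y =>
    (hc_map u X Y).trans (hc_map v X Y).symm
  exact ⟨equivOfERel g (hB.eRel_comp_iff hB fun X Y _ _ => hg X Y), hgm⟩

instance : L₀.IsRelational := fun _ => inferInstanceAs (IsEmpty Empty)

theorem M0_hrushovski_property_general {M : Type u} [L₀.Structure M]
    (hUH : L₀.IsUltrahomogeneous M) (hage : L₀.age M = K₀) {I : Type*} [Finite I]
    (S T : I → L₀.Substructure M) (hS : ∀ i, (S i : Set M).Finite) (f : ∀ i, S i ≃[L₀] T i) :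
    ∃ F : L₀.Substructure M, (F : Set M).Finite ∧
      ∃ (hSF : ∀ i, S i ≤ F) (_ : ∀ i, T i ≤ F) (g : I → (F ≃[L₀] F)),
        ∀ (i : I) (x : M) (hx : x ∈ S i),
          ((g i ⟨x, hSF i hx⟩ : F) : M) = ((f i ⟨x, hx⟩ : T i) : M) := by
  have hT (i : I) : (T i : Set M).Finite :=
    have : Finite (S i) := hS i
    Finite.of_equiv (S i) (f i).toEquiv
  have hA := Substructure.fg_closure (L := L₀) (Set.finite_iUnion fun i => (hS i).union (hT i))
  set A := Substructure.closure L₀ (⋃ i, (S i : Set M) ∪ T i)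
  have hSTA (i : I) : (S i : Set M) ∪ T i ⊆ A :=
    (Set.subset_iUnion (fun i => (S i : Set M) ∪ T i) i).trans Substructure.subset_closure
  have hSA (i : I) : S i ≤ A := Set.subset_union_left.trans (hSTA i)
  have hTA (i : I) : T i ≤ A := Set.subset_union_right.trans (hSTA i)
  obtain ⟨F, hAF, hF, hext⟩ := exists_fg_extension_of_hasEPPA hUH (hage ▸ hasEPPA_K₀) hA
  choose g hg using fun i => hext (S i) (T i) (hSA i) (hTA i) (f i)
  exact ⟨F, hF.finite, fun i => (hSA i).trans hAF, fun i => (hTA i).trans hAF, g,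
    fun i x hx => hg i ⟨x, hx⟩⟩

/-- `M₀` satisfies Hrushovski's extension property: every finite family of
isomorphisms between finite substructures extends, inside some finite substructure `F`
containing all domains and ranges, to automorphisms of `F`. -/
theorem M0_hrushovski_property (M₀ : Type) [L₀.Structure M₀] [Countable M₀]
    (hUH : L₀.IsUltrahomogeneous M₀) (hage : L₀.age M₀ = K₀) :
    ∀ (k : ℕ) (S T : Fin k → L₀.Substructure M₀),
      (∀ i, Set.Finite (S i : Set M₀)) → (∀ i, Set.Finite (T i : Set M₀)) →
      ∀ f : (i : Fin k) → S i ≃[L₀] T i,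
        ∃ F : L₀.Substructure M₀, Set.Finite (F : Set M₀) ∧
          ∃ (hS : ∀ i, S i ≤ F) (_ : ∀ i, T i ≤ F) (g : Fin k → (F ≃[L₀] F)),
            ∀ (i : Fin k) (x : M₀) (hx : x ∈ S i),
              ((g i ⟨x, hS i hx⟩ : F) : M₀) = ((f i ⟨x, hx⟩ : T i) : M₀) :=
  fun _ S T hS _ f => M0_hrushovski_property_general hUH hage S T hS f
end

section
/- Let k ≥ 1 and for each i ≤ k let ρ_i be a finite partial injection on M_i (the set of E_i-classes of i-element subsets of M) which, when i ∈ P, is strictly increasing with respect to the order <_i on M_i. Then there exists an automorphism α of M such that for each i ≤ k the permutation of M_i induced by α agrees with ρ_i on the domain of ρ_i. -/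
open FirstOrder Language Structure CategoryTheory

/-- The language `L_P`: a `2n`-ary symbol `E_n` for each `n ≥ 1` and a `2n`-ary symbol
`<_n` for each `n ∈ P`. -/
def LP (P : Set ℕ) : FirstOrder.Language where
  Functions := fun _ => Empty
  Relations := fun k => {n : ℕ // 0 < n ∧ k = n + n} ⊕ {n : ℕ // n ∈ P ∧ k = n + n}

/-- The symbol `E_n` of `L_P`. -/
def EsymbP (P : Set ℕ) (n : ℕ) (hn : 0 < n) : (LP P).Relations (n + n) :=
  Sum.inl ⟨n, hn, rfl⟩

/-- The symbol `<_n` of `L_P`. -/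
def LTsymbP (P : Set ℕ) (n : ℕ) (hn : n ∈ P) : (LP P).Relations (n + n) :=
  Sum.inr ⟨n, hn, rfl⟩

/-- `E_n(x̄, ȳ)` in an `L_P`-structure. -/
def ERelP (P : Set ℕ) (M : Type*) [i : (LP P).Structure M] (n : ℕ) (hn : 0 < n)
    (x y : Fin n → M) : Prop :=
  @Structure.RelMap (LP P) M i (n + n) (EsymbP P n hn) (Fin.append x y)

/-- `x̄ <_n ȳ` in an `L_P`-structure. -/
def LTRelP (P : Set ℕ) (M : Type*) [i : (LP P).Structure M] (n : ℕ) (hn : n ∈ P)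
    (x y : Fin n → M) : Prop :=
  @Structure.RelMap (LP P) M i (n + n) (LTsymbP P n hn) (Fin.append x y)

/-- The defining conditions for membership in `K_P`: the `{E_n}`-part satisfies the
`K₀`-conditions, and for `n ∈ P` the relation `<_n` holds only on injective tuples, is
`E_n`-invariant, and induces a strict linear order on `E_n`-classes. -/
def IsKPStruct (P : Set ℕ) (C : Type*) [(LP P).Structure C] : Prop :=
  (∀ (n : ℕ) (hn : 0 < n),
    (∀ x y : Fin n → C, ERelP P C n hn x y → Function.Injective x ∧ Function.Injective y) ∧
    (∀ (x y : Fin n → C) (σ τ : Equiv.Perm (Fin n)),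
        ERelP P C n hn x y → ERelP P C n hn (x ∘ σ) (y ∘ τ)) ∧
    (∀ x : Fin n → C, Function.Injective x → ERelP P C n hn x x) ∧
    (∀ x y : Fin n → C, ERelP P C n hn x y → ERelP P C n hn y x) ∧
    (∀ x y z : Fin n → C, ERelP P C n hn x y → ERelP P C n hn y z → ERelP P C n hn x z)) ∧
  (∀ (n : ℕ) (hn : n ∈ P) (hn0 : 0 < n),
    (∀ x y : Fin n → C, LTRelP P C n hn x y → Function.Injective x ∧ Function.Injective y) ∧
    (∀ x x' y y' : Fin n → C, ERelP P C n hn0 x x' → ERelP P C n hn0 y y' →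
        LTRelP P C n hn x y → LTRelP P C n hn x' y') ∧
    (∀ x y : Fin n → C, LTRelP P C n hn x y → ¬ ERelP P C n hn0 x y) ∧
    (∀ x y z : Fin n → C, LTRelP P C n hn x y → LTRelP P C n hn y z → LTRelP P C n hn x z) ∧
    (∀ x y : Fin n → C, Function.Injective x → Function.Injective y →
        ¬ ERelP P C n hn0 x y → LTRelP P C n hn x y ∨ LTRelP P C n hn y x))

/-- The class `K_P` of finite `L_P`-structures as above. -/
def KP (P : Set ℕ) : Set (Bundled (LP P).Structure) := {C | Finite C ∧ IsKPStruct P C}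

/-!
The points `x n i` representing the domain and `y n i` representing the range of the partial maps
may overlap and may carry relations that the partial maps do not respect, so no isomorphism of the
substructures they generate need extend the maps. Instead, take a finite set of pairwise disjoint
blocks, one `n`-element block for each point of the domain, and make it a member `D` of `K_P` by
giving each block the class of its `x n i` and every other finite subset a fresh greatest class.
Amalgamating `D` freely with a finite substructure containing the `x n i`, the extension property
embeds `D` into `M` so that each block is `E_n`-equivalent to its `x n i`. As the partial maps
preserve and reflect `E_n` and `<_n`, labelling by the classes of the `y n i` gives the same
structure `D`, which therefore also embeds with each block equivalent to its `y n i`.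
Ultrahomogeneity provides an automorphism carrying the first copy of `D` to the second.
-/

universe u v w

instance LP.isRelational (P : Set ℕ) : (LP P).IsRelational :=
  fun _ => inferInstanceAs (IsEmpty Empty)

section Relations

variable {P : Set ℕ} {A : Type u} {B : Type v} [(LP P).Structure A] [(LP P).Structure B]

theorem comp_fin_append {α : Type u} {β : Type v} {n m : ℕ} (f : α → β) (x : Fin n → α)
    (y : Fin m → α) : f ∘ Fin.append x y = Fin.append (f ∘ x) (f ∘ y) :=
  funext (Fin.addCases (fun _ => by simp) (fun _ => by simp))

theorem eRelP_comp_iff (f : A ↪[LP P] B) {n : ℕ} (hn : 0 < n) (x y : Fin n → A) :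
    ERelP P B n hn (f ∘ x) (f ∘ y) ↔ ERelP P A n hn x y := by
  unfold ERelP
  rw [← comp_fin_append, f.map_rel]

theorem ltRelP_comp_iff (f : A ↪[LP P] B) {n : ℕ} (hn : n ∈ P) (x y : Fin n → A) :
    LTRelP P B n hn (f ∘ x) (f ∘ y) ↔ LTRelP P A n hn x y := by
  unfold LTRelP
  rw [← comp_fin_append, f.map_rel]

/-- An `L_P`-embedding from an injection preserving and reflecting all `E_n` and `<_n`. -/
def LP.embeddingOfRel (f : A ↪ B)
    (hE : ∀ n (hn : 0 < n) (x y : Fin n → A),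
      ERelP P B n hn (f ∘ x) (f ∘ y) ↔ ERelP P A n hn x y)
    (hL : ∀ n (hn : n ∈ P) (x y : Fin n → A),
      LTRelP P B n hn (f ∘ x) (f ∘ y) ↔ LTRelP P A n hn x y) : A ↪[LP P] B where
  toEmbedding := f
  map_fun' := fun g => g.elim
  map_rel' := by
    rintro _ (⟨n, hn, rfl⟩ | ⟨n, hn, rfl⟩) t <;>
      obtain ⟨⟨x, y⟩, rfl⟩ := (Fin.appendEquiv n n).surjective t
    · exact (iff_of_eq (congrArg _ (comp_fin_append f x y))).trans (hE n hn x y)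
    · exact (iff_of_eq (congrArg _ (comp_fin_append f x y))).trans (hL n hn x y)

/-- The `L_P`-structure on `C` in which `E_n` is interpreted by `E n` and `<_n` by `L n`; the `2n`
arguments of a symbol are split into two `n`-tuples. -/
@[reducible] def LP.structureOfRel (P : Set ℕ) {C : Type u}
    (E L : ∀ n, (Fin n → C) → (Fin n → C) → Prop) : (LP P).Structure C where
  funMap := fun g => g.elim
  RelMap := fun r t => match r with
    | .inl ⟨n, h⟩ => E n (fun i => t ((i.castAdd n).cast h.2.symm))
        fun i => t ((i.natAdd n).cast h.2.symm)
    | .inr ⟨n, h⟩ => L n (fun i => t ((i.castAdd n).cast h.2.symm))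
        fun i => t ((i.natAdd n).cast h.2.symm)

theorem eRelP_structureOfRel {C : Type u} (E L : ∀ n, (Fin n → C) → (Fin n → C) → Prop)
    {n : ℕ} (hn : 0 < n) (x y : Fin n → C) :
    @ERelP P C (LP.structureOfRel P E L) n hn x y ↔ E n x y := by
  change E n (fun i => Fin.append x y (i.castAdd n)) (fun i => Fin.append x y (i.natAdd n)) ↔ _
  simp only [Fin.append_left, Fin.append_right]

theorem ltRelP_structureOfRel {C : Type u} (E L : ∀ n, (Fin n → C) → (Fin n → C) → Prop)
    {n : ℕ} (hn : n ∈ P) (x y : Fin n → C) :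
    @LTRelP P C (LP.structureOfRel P E L) n hn x y ↔ L n x y := by
  change L n (fun i => Fin.append x y (i.castAdd n)) (fun i => Fin.append x y (i.natAdd n)) ↔ _
  simp only [Fin.append_left, Fin.append_right]

end Relations

theorem isStrictTotalOrder_withTop {α : Type u} [LT α] [IsStrictTotalOrder α (· < ·)] :
    IsStrictTotalOrder (WithTop α) (· < ·) := by
  classical
  let _ : LinearOrder α := linearOrderOfSTO (· < ·)
  infer_instance

section Labelling

variable {P : Set ℕ} {T : ℕ → Type w} [∀ n, LT (T n)] {C : Type u} {D : Type v}

/-- `lab` labels the `n`-element subsets of `C` so that `E_n` is equality and `<_n` is comparison of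
labels. Labels are assigned to all sets, but only those of `n`-element sets matter. -/
structure IsLabelling (P : Set ℕ) [(LP P).Structure C] (lab : ∀ n, Set C → T n) : Prop where
  eRelP_iff : ∀ {n : ℕ} (hn : 0 < n) (x y : Fin n → C), ERelP P C n hn x y ↔
    Function.Injective x ∧ Function.Injective y ∧ lab n (Set.range x) = lab n (Set.range y)
  ltRelP_iff : ∀ {n : ℕ} (hn : n ∈ P) (x y : Fin n → C), LTRelP P C n hn x y ↔
    Function.Injective x ∧ Function.Injective y ∧ lab n (Set.range x) < lab n (Set.range y)

/-- The `L_P`-structure whose relations are read off from a labelling of subsets. -/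
@[reducible] def labelledStructure (P : Set ℕ) (lab : ∀ n, Set C → T n) : (LP P).Structure C :=
  LP.structureOfRel P
    (fun n x y => Function.Injective x ∧ Function.Injective y ∧
      lab n (Set.range x) = lab n (Set.range y))
    (fun n x y => Function.Injective x ∧ Function.Injective y ∧
      lab n (Set.range x) < lab n (Set.range y))

theorem isLabelling_labelledStructure (P : Set ℕ) (lab : ∀ n, Set C → T n) :
    @IsLabelling T _ C P (labelledStructure P lab) lab :=
  let _ := labelledStructure P lab
  ⟨eRelP_structureOfRel _ _, ltRelP_structureOfRel _ _⟩

namespace IsLabelling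

variable [(LP P).Structure C] [(LP P).Structure D] {lab : ∀ n, Set C → T n}

theorem isKPStruct (h : IsLabelling P lab)
    (hT : ∀ n ∈ P, 0 < n → IsStrictTotalOrder (T n) (· < ·)) : IsKPStruct P C := by
  refine ⟨fun n hn => ?_, fun n hn hn0 => ?_⟩
  · simp only [h.eRelP_iff]
    refine ⟨fun x y hxy => ⟨hxy.1, hxy.2.1⟩, fun x y σ τ ⟨hx, hy, hxy⟩ => ?_,
      fun x hx => ⟨hx, hx, trivial⟩, fun x y ⟨hx, hy, hxy⟩ => ⟨hy, hx, hxy.symm⟩,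
      fun x y z ⟨hx, _, hxy⟩ ⟨_, hz, hyz⟩ => ⟨hx, hz, hxy.trans hyz⟩⟩
    rw [EquivLike.range_comp, EquivLike.range_comp]
    exact ⟨hx.comp σ.injective, hy.comp τ.injective, hxy⟩
  · have := hT n hn hn0
    simp only [h.eRelP_iff, h.ltRelP_iff]
    refine ⟨fun x y hxy => ⟨hxy.1, hxy.2.1⟩,
      fun x x' y y' ⟨_, hx', hxx'⟩ ⟨_, hy', hyy'⟩ ⟨_, _, hxy⟩ => ⟨hx', hy', hxx' ▸ hyy' ▸ hxy⟩,
      fun x y ⟨_, _, hlt⟩ ⟨_, _, heq⟩ => irrefl_of (· < ·) _ (heq ▸ hlt),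
      fun x y z ⟨hx, _, hxy⟩ ⟨_, hz, hyz⟩ => ⟨hx, hz, _root_.trans hxy hyz⟩,
      fun x y hx hy hne => ?_⟩
    rcases trichotomous_of (· < ·) (lab n (Set.range x)) (lab n (Set.range y)) with hlt | heq | hgt
    · exact Or.inl ⟨hx, hy, hlt⟩
    · exact absurd ⟨hx, hy, heq⟩ hne
    · exact Or.inr ⟨hy, hx, hgt⟩

theorem congr {T' : ℕ → Type*} [∀ n, LT (T' n)] {lab' : ∀ n, Set C → T' n}
    (h : IsLabelling P lab)
    (heq : ∀ n, 0 < n → ∀ s t, lab n s = lab n t ↔ lab' n s = lab' n t)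
    (hlt : ∀ n ∈ P, ∀ s t, lab n s < lab n t ↔ lab' n s < lab' n t) : IsLabelling P lab' where
  eRelP_iff hn x y := by rw [h.eRelP_iff, heq _ hn]
  ltRelP_iff hn x y := by rw [h.ltRelP_iff, hlt _ hn]

theorem comap {lab : ∀ n, Set D → T n} (h : IsLabelling P lab) (f : C ↪[LP P] D) :
    IsLabelling P fun n s => lab n (f '' s) where
  eRelP_iff hn x y := by
    simp only [← eRelP_comp_iff f, h.eRelP_iff, f.injective.of_comp_iff, Set.range_comp]
  ltRelP_iff hn x y := by
    simp only [← ltRelP_comp_iff f, h.ltRelP_iff, f.injective.of_comp_iff, Set.range_comp]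

/-- An injection that preserves labels, as an `L_P`-embedding. -/
def embedding {labD : ∀ n, Set D → T n} (hC : IsLabelling P lab) (hD : IsLabelling P labD)
    (hP : ∀ n ∈ P, 0 < n) (f : C ↪ D)
    (hf : ∀ n (s : Set C), s.Nonempty → labD n (f '' s) = lab n s) : C ↪[LP P] D :=
  have hrange {n : ℕ} (hn : 0 < n) (x : Fin n → C) :
      labD n (Set.range (f ∘ x)) = lab n (Set.range x) :=
    have : Nonempty (Fin n) := ⟨⟨0, hn⟩⟩
    Set.range_comp f x ▸ hf n _ (Set.range_nonempty x)
  LP.embeddingOfRel f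
    (fun n hn x y => by
      simp only [hD.eRelP_iff, hC.eRelP_iff, f.injective.of_comp_iff, hrange hn])
    (fun n hn x y => by
      simp only [hD.ltRelP_iff, hC.ltRelP_iff, f.injective.of_comp_iff, hrange (hP n hn)])

end IsLabelling

open Classical in
/-- The labelling of the free amalgam of two labelled sets: sets meeting both summands get the
fresh label `⊤`. The empty set is labelled as in `C`. -/
noncomputable def sumLabel {α : ℕ → Type w} (labC : ∀ n, Set C → WithTop (α n))
    (labD : ∀ n, Set D → WithTop (α n)) (n : ℕ) (s : Set (C ⊕ D)) : WithTop (α n) :=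
  if Sum.inr ⁻¹' s = ∅ then labC n (Sum.inl ⁻¹' s)
  else if Sum.inl ⁻¹' s = ∅ then labD n (Sum.inr ⁻¹' s)
  else ⊤

section SumLabel

variable {α : ℕ → Type w} (labC : ∀ n, Set C → WithTop (α n)) (labD : ∀ n, Set D → WithTop (α n))

theorem sumLabel_image_inl (n : ℕ) (s : Set C) :
    sumLabel labC labD n (Sum.inl '' s) = labC n s := by
  rw [sumLabel, if_pos (Set.preimage_inr_image_inl s), Set.preimage_image_eq s Sum.inl_injective]

theorem sumLabel_image_inr (n : ℕ) {s : Set D} (hs : s.Nonempty) :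
    sumLabel labC labD n (Sum.inr '' s) = labD n s := by
  rw [sumLabel, Set.preimage_image_eq s Sum.inr_injective, if_neg hs.ne_empty,
    if_pos (Set.preimage_inl_image_inr s)]

end SumLabel

end Labelling

section EClass

/-- The set `M_n` of `E_n`-classes of `n`-element subsets, as a quotient of the injective
`n`-tuples. -/
def EClass (P : Set ℕ) (C : Type u) [(LP P).Structure C] (n : ℕ) : Type u :=
  Quot fun x y : Fin n ↪ C => ∃ hn : 0 < n, ERelP P C n hn x y

variable {P : Set ℕ} {C : Type u} [(LP P).Structure C] {n : ℕ}

namespace EClass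

/-- The `E_n`-class of an injective `n`-tuple. -/
def mk (P : Set ℕ) [(LP P).Structure C] (x : Fin n ↪ C) : EClass P C n := Quot.mk _ x

/-- The relation induced by `<_n` when `n ∈ P`, and the empty relation otherwise. -/
instance : LT (EClass P C n) where
  lt a b := ∃ (hn : n ∈ P) (x y : Fin n ↪ C), mk P x = a ∧ mk P y = b ∧ LTRelP P C n hn x y

theorem mk_eq_mk (hC : IsKPStruct P C) (hn : 0 < n) {x y : Fin n ↪ C} :
    mk P x = mk P y ↔ ERelP P C n hn x y := by
  obtain ⟨-, -, hrefl, hsymm, htrans⟩ := hC.1 n hn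
  have hequiv : _root_.Equivalence fun x y : Fin n ↪ C => ∃ hn : 0 < n, ERelP P C n hn x y :=
    ⟨fun x => ⟨hn, hrefl x x.injective⟩, fun ⟨_, h⟩ => ⟨hn, hsymm _ _ h⟩,
      fun ⟨_, h⟩ ⟨_, h'⟩ => ⟨hn, htrans _ _ _ h h'⟩⟩
  exact (Quot.eq.trans hequiv.eqvGen_iff).trans (exists_prop_of_true hn)

theorem mk_lt_mk (hC : IsKPStruct P C) (hn : 0 < n) (hnP : n ∈ P) {x y : Fin n ↪ C} :
    mk P x < mk P y ↔ LTRelP P C n hnP x y := by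
  refine ⟨fun ⟨_, x', y', hx, hy, h⟩ => ?_, fun h => ⟨hnP, x, y, rfl, rfl, h⟩⟩
  exact (hC.2 n hnP hn).2.1 _ _ _ _ ((mk_eq_mk hC hn).1 hx) ((mk_eq_mk hC hn).1 hy) h

theorem isStrictTotalOrder (hC : IsKPStruct P C) (hn : 0 < n) (hnP : n ∈ P) :
    IsStrictTotalOrder (EClass P C n) (· < ·) := by
  obtain ⟨-, -, hne, htrans, htotal⟩ := hC.2 n hnP hn
  refine { irrefl := ?irrefl, trans := ?trans, trichotomous := ?trichotomous }
  case irrefl =>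
    rintro ⟨x⟩ h
    exact hne x x ((mk_lt_mk hC hn hnP).1 h) ((hC.1 n hn).2.2.1 x x.injective)
  case trans =>
    rintro ⟨x⟩ ⟨y⟩ ⟨z⟩ hxy hyz
    exact (mk_lt_mk hC hn hnP).2
      (htrans x y z ((mk_lt_mk hC hn hnP).1 hxy) ((mk_lt_mk hC hn hnP).1 hyz))
  case trichotomous =>
    rintro ⟨x⟩ ⟨y⟩ hxy hyx
    by_contra h
    rcases htotal x y x.injective y.injective (mt (mk_eq_mk hC hn).2 h) with hlt | hgt
    exacts [hxy ((mk_lt_mk hC hn hnP).2 hlt), hyx ((mk_lt_mk hC hn hnP).2 hgt)]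

theorem mk_eq_mk_of_range_eq (hC : IsKPStruct P C) (hn : 0 < n) {x y : Fin n ↪ C}
    (h : Set.range x = Set.range y) : mk P x = mk P y := by
  obtain ⟨-, hperm, hrefl, -, -⟩ := hC.1 n hn
  let σ : Equiv.Perm (Fin n) :=
    (Equiv.ofInjective x x.injective).trans
      ((Equiv.setCongr h).trans (Equiv.ofInjective y y.injective).symm)
  have hσ : y ∘ σ = x := funext fun i => Equiv.apply_ofInjective_symm y.injective _
  rw [mk_eq_mk hC hn, ← hσ]
  exact hperm y y σ (Equiv.refl _) (hrefl y y.injective)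

open Classical in
/-- The `E_n`-class of an `n`-element set, with value `⊤` on all other sets. -/
noncomputable def ofSet (P : Set ℕ) [(LP P).Structure C] (n : ℕ) (s : Set C) :
    WithTop (EClass P C n) :=
  if h : ∃ x : Fin n ↪ C, Set.range x = s then mk P h.choose else ⊤

theorem ofSet_range (hC : IsKPStruct P C) (hn : 0 < n) (x : Fin n ↪ C) :
    ofSet P n (Set.range x) = mk P x := by
  have h : ∃ y : Fin n ↪ C, Set.range y = Set.range x := ⟨x, rfl⟩
  rw [ofSet, dif_pos h, mk_eq_mk_of_range_eq hC hn h.choose_spec]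

end EClass

theorem IsKPStruct.isLabelling_ofSet (hP : ∀ n ∈ P, 0 < n) (hC : IsKPStruct P C) :
    IsLabelling P fun n (s : Set C) => EClass.ofSet P n s where
  eRelP_iff {n} hn x y := by
    have hiff (x y : Fin n ↪ C) :
        ERelP P C n hn x y ↔ EClass.ofSet P n (Set.range x) = EClass.ofSet P n (Set.range y) := by
      rw [EClass.ofSet_range hC hn, EClass.ofSet_range hC hn, WithTop.coe_inj,
        EClass.mk_eq_mk hC hn]
    exact ⟨fun h =>
        have ⟨hx, hy⟩ := (hC.1 n hn).1 x y h
        ⟨hx, hy, (hiff ⟨x, hx⟩ ⟨y, hy⟩).1 h⟩,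
      fun ⟨hx, hy, h⟩ => (hiff ⟨x, hx⟩ ⟨y, hy⟩).2 h⟩
  ltRelP_iff {n} hnP x y := by
    have hn := hP n hnP
    have hiff (x y : Fin n ↪ C) :
        LTRelP P C n hnP x y ↔ EClass.ofSet P n (Set.range x) < EClass.ofSet P n (Set.range y) := by
      rw [EClass.ofSet_range hC hn, EClass.ofSet_range hC hn, WithTop.coe_lt_coe,
        EClass.mk_lt_mk hC hn hnP]
    exact ⟨fun h =>
        have ⟨hx, hy⟩ := (hC.2 n hnP hn).1 x y h
        ⟨hx, hy, (hiff ⟨x, hx⟩ ⟨y, hy⟩).1 h⟩,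
      fun ⟨hx, hy, h⟩ => (hiff ⟨x, hx⟩ ⟨y, hy⟩).2 h⟩

end EClass

section Ultrahomogeneous

variable {L : FirstOrder.Language} {M : Type u} [L.Structure M]

theorem exists_equiv_comp_eq (hM : L.IsUltrahomogeneous M) {D : Type v} [L.Structure D]
    (hD : Structure.FG L D) (f g : D ↪[L] M) : ∃ α : M ≃[L] M, α.toEmbedding.comp f = g := by
  obtain ⟨α, hα⟩ := hM f.toHom.range (hD.range f.toHom) (g.comp f.equivRange.symm.toEmbedding)
  refine ⟨α, Embedding.ext fun a => ?_⟩
  have ha := DFunLike.congr_fun hα (f.equivRange a)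
  simpa using ha.symm

theorem exists_fg_substructure_forall_mem {κ : Type v} [Finite κ] {n : κ → ℕ}
    (x : ∀ i, Fin (n i) → M) : ∃ S : L.Substructure M, S.FG ∧ ∀ i l, x i l ∈ S :=
  ⟨Substructure.closure L (⋃ i, Set.range (x i)),
    Substructure.fg_closure (Set.finite_iUnion fun i => Set.finite_range (x i)),
    fun i l => Substructure.subset_closure (Set.mem_iUnion_of_mem i ⟨l, rfl⟩)⟩

end Ultrahomogeneous

section Limit

variable {P : Set ℕ} {M : Type w} [(LP P).Structure M]

theorem isKPStruct_of_forall_fg (h : ∀ S : (LP P).Substructure M, S.FG → IsKPStruct P S) :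
    IsKPStruct P M := by
  have lift {n : ℕ} (x y z t : Fin n → M) : ∃ (S : (LP P).Substructure M)
      (x' y' z' t' : Fin n → S), IsKPStruct P S ∧ S.subtype ∘ x' = x ∧ S.subtype ∘ y' = y ∧
        S.subtype ∘ z' = z ∧ S.subtype ∘ t' = t := by
    obtain ⟨S, hS, hmem⟩ := exists_fg_substructure_forall_mem (L := LP P) ![x, y, z, t]
    exact ⟨S, fun l => ⟨x l, hmem 0 l⟩, fun l => ⟨y l, hmem 1 l⟩, fun l => ⟨z l, hmem 2 l⟩,
      fun l => ⟨t l, hmem 3 l⟩, h S hS, rfl, rfl, rfl, rfl⟩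
  refine ⟨fun n hn => ⟨fun x y => ?_, fun x y σ τ => ?_, fun x => ?_, fun x y => ?_,
    fun x y z => ?_⟩, fun n hn hn0 => ⟨fun x y => ?_, fun x x' y y' => ?_, fun x y => ?_,
    fun x y z => ?_, fun x y => ?_⟩⟩
  · obtain ⟨S, x, y, _, _, hS, rfl, rfl, -, -⟩ := lift x y x x
    simpa only [eRelP_comp_iff, S.subtype.injective.of_comp_iff] using (hS.1 n hn).1 x y
  · obtain ⟨S, x, y, _, _, hS, rfl, rfl, -, -⟩ := lift x y x x
    simpa only [Function.comp_assoc, eRelP_comp_iff] using (hS.1 n hn).2.1 x y σ τ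
  · obtain ⟨S, x, _, _, _, hS, rfl, -, -, -⟩ := lift x x x x
    simpa only [eRelP_comp_iff, S.subtype.injective.of_comp_iff] using (hS.1 n hn).2.2.1 x
  · obtain ⟨S, x, y, _, _, hS, rfl, rfl, -, -⟩ := lift x y x x
    simpa only [eRelP_comp_iff] using (hS.1 n hn).2.2.2.1 x y
  · obtain ⟨S, x, y, z, _, hS, rfl, rfl, rfl, -⟩ := lift x y z x
    simpa only [eRelP_comp_iff] using (hS.1 n hn).2.2.2.2 x y z
  · obtain ⟨S, x, y, _, _, hS, rfl, rfl, -, -⟩ := lift x y x x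
    simpa only [ltRelP_comp_iff, S.subtype.injective.of_comp_iff] using (hS.2 n hn hn0).1 x y
  · obtain ⟨S, x, x', y, y', hS, rfl, rfl, rfl, rfl⟩ := lift x x' y y'
    simpa only [eRelP_comp_iff, ltRelP_comp_iff] using (hS.2 n hn hn0).2.1 x x' y y'
  · obtain ⟨S, x, y, _, _, hS, rfl, rfl, -, -⟩ := lift x y x x
    simpa only [eRelP_comp_iff, ltRelP_comp_iff] using (hS.2 n hn hn0).2.2.1 x y
  · obtain ⟨S, x, y, z, _, hS, rfl, rfl, rfl, -⟩ := lift x y z x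
    simpa only [ltRelP_comp_iff] using (hS.2 n hn hn0).2.2.2.1 x y z
  · obtain ⟨S, x, y, _, _, hS, rfl, rfl, -, -⟩ := lift x y x x
    simpa only [eRelP_comp_iff, ltRelP_comp_iff, S.subtype.injective.of_comp_iff]
      using (hS.2 n hn hn0).2.2.2.2 x y

theorem isKPStruct_of_age_eq (hage : (LP P).age M = KP P) : IsKPStruct P M := by
  refine isKPStruct_of_forall_fg fun S hS => ?_
  have hmem : (Bundled.of S : Bundled (LP P).Structure) ∈ (LP P).age M :=
    ⟨(Substructure.fg_iff_structure_fg S).1 hS, ⟨S.subtype⟩⟩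
  rw [hage] at hmem
  exact hmem.2

theorem exists_embedding_of_isLabelling (hP : ∀ n ∈ P, 0 < n)
    (hUH : (LP P).IsUltrahomogeneous M) (hage : (LP P).age M = KP P)
    {S : (LP P).Substructure M} (hS : S.FG) {D : Type w} [Finite D] [(LP P).Structure D]
    {lab : ∀ n, Set D → WithTop (EClass P M n)} (hD : IsLabelling P lab) :
    ∃ d : D ↪[LP P] M, ∀ n (hn : 0 < n) (a : Fin n ↪ D) (x : Fin n ↪ M), (∀ l, x l ∈ S) →
      lab n (Set.range a) = EClass.mk P x → ERelP P M n hn x (d ∘ a) := by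
  have hM := isKPStruct_of_age_eq hage
  have hSlab := (hM.isLabelling_ofSet hP).comap S.subtype
  let labC := sumLabel (fun n s => EClass.ofSet P n (S.subtype '' s)) lab
  let _ := labelledStructure P labC
  have hC : IsLabelling P labC := isLabelling_labelledStructure P labC
  have _ : Finite S := hS.finite
  have hmem : (Bundled.of (S ⊕ D) : Bundled (LP P).Structure) ∈ KP P :=
    ⟨inferInstanceAs (Finite (S ⊕ D)), hC.isKPStruct fun n hnP hn =>
      have := EClass.isStrictTotalOrder hM hn hnP
      isStrictTotalOrder_withTop⟩
  rw [← hage] at hmem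
  have _ : Nonempty (S ⊕ D ↪[LP P] M) := hmem.2
  obtain ⟨f, hf⟩ := hUH.extend_embedding ((Substructure.fg_iff_structure_fg S).1 hS) S.subtype
    (hSlab.embedding hC hP .inl fun n s _ => sumLabel_image_inl _ _ n s)
  refine ⟨f.comp (hD.embedding hC hP .inr fun n s hs => sumLabel_image_inr _ _ n hs),
    fun n hn a x hx hax => ?_⟩
  let x' : Fin n → S := fun l => ⟨x l, hx l⟩
  have hfx : x = f ∘ Sum.inl ∘ x' := funext fun l => DFunLike.congr_fun hf (x' l)
  have hlab : labC n (Set.range (Sum.inl ∘ x')) = labC n (Set.range (Sum.inr ∘ a)) := by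
    have _ : Nonempty (Fin n) := ⟨⟨0, hn⟩⟩
    have hx' : S.subtype '' Set.range x' = Set.range x := (Set.range_comp _ _).symm
    simp only [labC, Set.range_comp, sumLabel_image_inl,
      sumLabel_image_inr _ _ _ (Set.range_nonempty a), hax, hx', EClass.ofSet_range hM hn]
  rw [hfx]
  exact (eRelP_comp_iff f hn _ _).2 ((hC.eRelP_iff hn _ _).2
    ⟨Sum.inl_injective.comp fun _ _ h => x.injective (congrArg Subtype.val h),
      Sum.inr_injective.comp a.injective, hlab⟩)

end Limit

section Block

variable {P : Set ℕ} {M : Type w} [(LP P).Structure M] {ι : ℕ → Type w}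

/-- The `i`-th block of size `n`: in the disjoint union of one block per index, its enumeration. -/
def block (n : ℕ) (i : ι n) : Fin n ↪ Σ n, ι n × Fin n :=
  ⟨fun l => ⟨n, i, l⟩, fun l l' h => by simpa using h⟩

theorem finite_sigma_prod_fin [Finite (Σ n, ι n)] : Finite (Σ n, ι n × Fin n) :=
  Finite.of_surjective
    (fun p : Σ p : Σ n, ι n, Fin p.1 => (⟨p.1.1, p.1.2, p.2⟩ : Σ n, ι n × Fin n))
    fun ⟨n, i, l⟩ => ⟨⟨⟨n, i⟩, l⟩, rfl⟩

theorem range_block_injective {n : ℕ} (hn : 0 < n) :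
    Function.Injective fun i : ι n => Set.range (block n i) := by
  intro i j hij
  obtain ⟨l, hl⟩ : block n i ⟨0, hn⟩ ∈ Set.range (block n j) := hij.subset ⟨⟨0, hn⟩, rfl⟩
  exact (congrArg Prod.fst (eq_of_heq (Sigma.mk.inj hl).2)).symm

/-- The labelling of sets of block points that gives the block `i` of size `n` the class of `x n i`,
and every other set the fresh label `⊤`. -/
noncomputable def blockLabel (P : Set ℕ) [(LP P).Structure M] (x : ∀ n, ι n → Fin n ↪ M) (n : ℕ)
    (s : Set (Σ n, ι n × Fin n)) : WithTop (EClass P M n) :=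
  (Function.partialInv (fun i : ι n => Set.range (block n i)) s).elim ⊤
    fun i => EClass.mk P (x n i)

theorem blockLabel_range_block (x : ∀ n, ι n → Fin n ↪ M) {n : ℕ} (hn : 0 < n) (i : ι n) :
    blockLabel P x n (Set.range (block n i)) = EClass.mk P (x n i) := by
  rw [blockLabel, Function.partialInv_left (range_block_injective hn), Option.elim_some]

theorem IsLabelling.blockLabel_congr [(LP P).Structure (Σ n, ι n × Fin n)]
    (hP : ∀ n ∈ P, 0 < n) (hM : IsKPStruct P M) {x y : ∀ n, ι n → Fin n ↪ M}
    (hE : ∀ n (hn : 0 < n) i j,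
      ERelP P M n hn (x n i) (x n j) ↔ ERelP P M n hn (y n i) (y n j))
    (hL : ∀ n (hn : n ∈ P) i j,
      LTRelP P M n hn (x n i) (x n j) ↔ LTRelP P M n hn (y n i) (y n j))
    (h : IsLabelling P (blockLabel P x)) : IsLabelling P (blockLabel P y) := by
  refine h.congr (fun n hn s t => ?_) fun n hnP s t => ?_ <;> unfold blockLabel <;>
    rcases Function.partialInv _ s with _ | i <;> rcases Function.partialInv _ t with _ | j
  case refine_1.some.some => simp [EClass.mk_eq_mk hM hn, hE]
  case refine_2.some.some => simp [EClass.mk_lt_mk hM (hP n hnP) hnP, hL]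
  all_goals simp

theorem exists_embedding_block [Finite (Σ n, ι n)] (hP : ∀ n ∈ P, 0 < n)
    (hUH : (LP P).IsUltrahomogeneous M) (hage : (LP P).age M = KP P)
    [(LP P).Structure (Σ n, ι n × Fin n)]
    {x : ∀ n, ι n → Fin n ↪ M} (h : IsLabelling P (blockLabel P x)) :
    ∃ d : (Σ n, ι n × Fin n) ↪[LP P] M,
      ∀ n (hn : 0 < n) i, ERelP P M n hn (x n i) (d ∘ block n i) := by
  have _ : Finite (Σ n, ι n × Fin n) := finite_sigma_prod_fin
  obtain ⟨S, hS, hxS⟩ :=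
    exists_fg_substructure_forall_mem (L := LP P) fun p : Σ n, ι n => x p.1 p.2
  obtain ⟨d, hd⟩ := exists_embedding_of_isLabelling hP hUH hage hS h
  exact ⟨d, fun n hn i =>
    hd n hn (block n i) (x n i) (hxS ⟨n, i⟩) (blockLabel_range_block x hn i)⟩

theorem exists_equiv_forall_eRelP_comp [Finite (Σ n, ι n)] (hP : ∀ n ∈ P, 0 < n)
    (hUH : (LP P).IsUltrahomogeneous M) (hage : (LP P).age M = KP P)
    (x y : ∀ n, ι n → Fin n ↪ M)
    (hE : ∀ n (hn : 0 < n) i j,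
      ERelP P M n hn (x n i) (x n j) ↔ ERelP P M n hn (y n i) (y n j))
    (hL : ∀ n (hn : n ∈ P) i j,
      LTRelP P M n hn (x n i) (x n j) ↔ LTRelP P M n hn (y n i) (y n j)) :
    ∃ α : M ≃[LP P] M, ∀ n (hn : 0 < n) i, ERelP P M n hn (α ∘ x n i) (y n i) := by
  have hM := isKPStruct_of_age_eq hage
  have hfin : Finite (Σ n, ι n × Fin n) := finite_sigma_prod_fin
  let _ := labelledStructure P (blockLabel P x)
  have hx : IsLabelling P (blockLabel P x) := isLabelling_labelledStructure P _
  obtain ⟨d, hd⟩ := exists_embedding_block hP hUH hage hx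
  obtain ⟨e, he⟩ := exists_embedding_block hP hUH hage (hx.blockLabel_congr hP hM hE hL)
  obtain ⟨α, rfl⟩ := exists_equiv_comp_eq hUH (Structure.fg_iff_finite.2 hfin) d e
  refine ⟨α, fun n hn i => ?_⟩
  obtain ⟨-, -, -, hsymm, htrans⟩ := hM.1 n hn
  exact htrans _ _ _ ((eRelP_comp_iff α.toEmbedding hn _ _).2 (hd n hn i)) (hsymm _ _ (he n hn i))

end Block

theorem KP_limit_realizes_partial_maps_general (P : Set ℕ) (hP : ∀ n ∈ P, 0 < n)
    (M : Type w) [(LP P).Structure M]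
    (hUH : (LP P).IsUltrahomogeneous M) (hage : (LP P).age M = KP P)
    (k : ℕ) (m : ℕ → ℕ) (x y : (i : ℕ) → ℕ → (Fin i → M))
    (hinj : ∀ (i : ℕ), 0 < i → i ≤ k → ∀ j < m i,
        Function.Injective (x i j) ∧ Function.Injective (y i j))
    (hdom : ∀ (i : ℕ) (hi : 0 < i), i ≤ k → ∀ j < m i, ∀ j' < m i, j ≠ j' →
        ¬ ERelP P M i hi (x i j) (x i j') ∧ ¬ ERelP P M i hi (y i j) (y i j'))
    (hord : ∀ (i : ℕ) (hiP : i ∈ P), i ≤ k → ∀ j < m i, ∀ j' < m i,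
        (LTRelP P M i hiP (x i j) (x i j') ↔ LTRelP P M i hiP (y i j) (y i j'))) :
    ∃ α : M ≃[LP P] M, ∀ (i : ℕ) (hi : 0 < i), i ≤ k → ∀ j < m i,
      ERelP P M i hi (fun l => α (x i j l)) (y i j) := by
  let ι (n : ℕ) : Type w := {j : ULift.{w} ℕ // n ∈ Set.Icc 1 k ∧ j.down < m n}
  have _ : Finite (Σ n, ι n) := Finite.of_surjective
    (fun p : Σ n : Set.Icc 1 k, Fin (m n) => (⟨p.1, ⟨p.2⟩, p.1.2, p.2.2⟩ : Σ n, ι n))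
    fun ⟨n, ⟨j⟩, hn, hj⟩ => ⟨⟨⟨n, hn⟩, ⟨j, hj⟩⟩, rfl⟩
  have hE : ∀ n (hn : 0 < n) (i j : ι n), ERelP P M n hn (x n i.1.down) (x n j.1.down) ↔
      ERelP P M n hn (y n i.1.down) (y n j.1.down) := by
    intro n hn ⟨⟨i⟩, hnk, hi⟩ ⟨⟨j⟩, _, hj⟩
    have hrefl := ((isKPStruct_of_age_eq hage).1 n hn).2.2.1
    obtain ⟨hx, hy⟩ := hinj n hn hnk.2 i hi
    rcases eq_or_ne i j with rfl | hij
    · exact iff_of_true (hrefl _ hx) (hrefl _ hy)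
    · exact iff_of_false (hdom n hn hnk.2 i hi j hj hij).1 (hdom n hn hnk.2 i hi j hj hij).2
  obtain ⟨α, hα⟩ := exists_equiv_forall_eRelP_comp hP hUH hage
    (fun n (i : ι n) => ⟨x n i.1.down, (hinj n i.2.1.1 i.2.1.2 _ i.2.2).1⟩)
    (fun n (i : ι n) => ⟨y n i.1.down, (hinj n i.2.1.1 i.2.1.2 _ i.2.2).2⟩)
    hE fun n hn i j => hord n hn i.2.1.2 _ i.2.2 _ j.2.2
  exact ⟨α, fun i hi hik j hj => hα i hi ⟨⟨j⟩, ⟨hi, hik⟩, hj⟩⟩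

/-- every finite family `(ρ_i)_{1 ≤ i ≤ k}` of finite partial injections on
the sets `M_i` of `E_i`-classes (order-preserving w.r.t. `<_i` when `i ∈ P`) is realised
by an automorphism of `M`.  The partial map `ρ_i` is presented by two lists
`x i 0, …, x i (m i - 1)` and `y i 0, …, y i (m i - 1)` of representative tuples: `ρ_i`
sends the `E_i`-class of `x i j` to that of `y i j`. -/
theorem KP_limit_realizes_partial_maps (P : Set ℕ) (hP : ∀ n ∈ P, 3 ≤ n)
    (M : Type) [(LP P).Structure M] [Countable M]
    (hUH : (LP P).IsUltrahomogeneous M) (hage : (LP P).age M = KP P)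
    (k : ℕ) (m : ℕ → ℕ) (x y : (i : ℕ) → ℕ → (Fin i → M))
    -- the representing tuples are injective
    (hinj : ∀ (i : ℕ), 0 < i → i ≤ k → ∀ j < m i,
        Function.Injective (x i j) ∧ Function.Injective (y i j))
    -- distinct entries of the domain (resp. range) list represent distinct classes,
    -- so each ρ_i is a well-defined partial injection
    (hdom : ∀ (i : ℕ) (hi : 0 < i), i ≤ k → ∀ j < m i, ∀ j' < m i, j ≠ j' →
        ¬ ERelP P M i hi (x i j) (x i j') ∧ ¬ ERelP P M i hi (y i j) (y i j'))
    -- when i ∈ P, ρ_i is strictly increasing w.r.t. <_i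
    (hord : ∀ (i : ℕ) (hiP : i ∈ P), i ≤ k → ∀ j < m i, ∀ j' < m i,
        (LTRelP P M i hiP (x i j) (x i j') ↔ LTRelP P M i hiP (y i j) (y i j'))) :
    ∃ α : M ≃[LP P] M, ∀ (i : ℕ) (hi : 0 < i), i ≤ k → ∀ j < m i,
      ERelP P M i hi (fun l => α (x i j l)) (y i j) := by
  exact KP_limit_realizes_partial_maps_general P (fun n hn => Nat.zero_lt_of_lt (hP n hn)) M
    hUH hage k m x y hinj hdom hord
end
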